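/- Let R be a prime Noetherian ring of Krull dimension n, X a set of prime ideals p of R each with Kdim(R/p) = m ≤ n, and V = ∩_{p∈X} C(p). Suppose X has the right intersection condition: for every right ideal I, if I ∩ C(p) ≠ ∅ for all p ∈ X then I ∩ V ≠ ∅. Define k = {right ideals I | I ∩ V ≠ ∅} and g = {right ideals I | Kdim(R/I) < m}. Then g ⊆ k. -/

import Mathlib

open MulOpposite
universe u

/-- Gabriel–Rentschler deviation: `DevLE α P` means the deviation of the
poset `P` is at most `α`. -/
def DevLE : Ordinal.{u} → (P : Type u) → [inst : PartialOrder P] → Prop :=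
  fun α P _ =>
    ∀ f : ℕ → P, (∀ n, f (n + 1) ≤ f n) →
      ∃ N : ℕ, ∀ n, N ≤ n →
        f (n + 1) = f n ∨ ∃ β, ∃ _ : β < α, DevLE β (Set.Icc (f (n + 1)) (f n))
termination_by α => α

/-- Right ideals of `R`, as submodules of `R` viewed as a right module. -/
abbrev RightIdeal (R : Type u) [Ring R] : Type u := Submodule Rᵐᵒᵖ R

/-- Gabriel–Rentschler Krull dimension of a right `R`-module `M`
(least `α` bounding the deviation of the submodule lattice; junk value `0`
if no such ordinal exists). -/
noncomputable def rKdim (R : Type u) [Ring R] (M : Type u) [AddCommGroup M]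
    [Module Rᵐᵒᵖ M] : Ordinal.{u} :=
  sInf {α : Ordinal.{u} | DevLE α (Submodule Rᵐᵒᵖ M)}

/-- `x⁻¹(I) = {a | x * a ∈ I}`, a right ideal. -/
def preIdeal {R : Type u} [Ring R] (x : R) (I : RightIdeal R) : RightIdeal R where
  carrier := {a : R | x * a ∈ I}
  add_mem' := by intro a b ha hb; simpa [mul_add] using add_mem ha hb
  zero_mem' := by simp
  smul_mem' := by
    intro r a ha
    show x * (op (unop r) • a) ∈ I
    rw [op_smul_eq_mul, ← mul_assoc]
    exact I.smul_mem r ha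

/-- `S` is a right Ore set. -/
def RightOre {R : Type u} [Ring R] (S : Set R) : Prop :=
  ∀ r : R, ∀ s ∈ S, ∃ r' : R, ∃ s' ∈ S, r * s' = s * r'

/-- A multiplicatively closed set. -/
def MulClosed {R : Type u} [Ring R] (S : Set R) : Prop :=
  ∀ a ∈ S, ∀ b ∈ S, a * b ∈ S

/-- A Gabriel filter of right ideals. -/
def IsGabrielFilter {R : Type u} [Ring R] (F : Set (RightIdeal R)) : Prop :=
  (∀ I ∈ F, ∀ J : RightIdeal R, I ≤ J → J ∈ F) ∧
  (∀ I ∈ F, ∀ J ∈ F, I ⊓ J ∈ F) ∧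
  (∀ I ∈ F, ∀ x : R, preIdeal x I ∈ F)

/-- A right ideal that is two-sided. -/
def TwoSided {R : Type u} [Ring R] (I : RightIdeal R) : Prop :=
  ∀ r : R, ∀ x ∈ I, r * x ∈ I

/-- A (two-sided) prime ideal of a possibly noncommutative ring. -/
def IsPrimeIdeal {R : Type u} [Ring R] (p : RightIdeal R) : Prop :=
  TwoSided p ∧ p ≠ ⊤ ∧ ∀ a b : R, (∀ r : R, a * r * b ∈ p) → a ∈ p ∨ b ∈ p

/-- `C(p)`: the elements of `R` regular modulo `p`. -/
def CMod {R : Type u} [Ring R] (p : RightIdeal R) : Set R :=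
  {c : R | (∀ a : R, c * a ∈ p → a ∈ p) ∧ (∀ a : R, a * c ∈ p → a ∈ p)}

/-- A prime ring. -/
def IsPrimeRing (R : Type u) [Ring R] : Prop :=
  ∀ a b : R, (∀ r : R, a * r * b = 0) → a = 0 ∨ b = 0

/-- A right module is `V`-torsion. -/
def IsTorsionBy' {R : Type u} [Ring R] (V : Set R) (M : Type u) [AddCommGroup M]
    [Module Rᵐᵒᵖ M] : Prop :=
  ∀ x : M, ∃ v ∈ V, op v • x = 0

/-- The annihilator (as a set) of a right module. -/
def annSet (R : Type u) [Ring R] (M : Type u) [AddCommGroup M] [Module Rᵐᵒᵖ M] :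
    Set R :=
  {a : R | ∀ x : M, op a • x = 0}

/-- `R` is right fully bounded: in every prime factor, every essential right
ideal contains a nonzero two-sided ideal. -/
def RightFullyBounded (R : Type u) [Ring R] : Prop :=
  ∀ p : RightIdeal R, IsPrimeIdeal p →
    ∀ I : RightIdeal R, p ≤ I →
      (∀ J : RightIdeal R, p < J → p < I ⊓ J) →
      ∃ A : RightIdeal R, TwoSided A ∧ p < A ∧ A ≤ I

/-- A uniform right module: any two nonzero submodules intersect nontrivially. -/
def IsUniformMod (R : Type u) [Ring R] (M : Type u) [AddCommGroup M]
    [Module Rᵐᵒᵖ M] : Prop :=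
  ∀ N N' : Submodule Rᵐᵒᵖ M, N ≠ ⊥ → N' ≠ ⊥ → N ⊓ N' ≠ ⊥

/-- The annihilator (as a set of elements of `R`) of a submodule. -/
def annSubSet (R : Type u) [Ring R] {M : Type u} [AddCommGroup M]
    [Module Rᵐᵒᵖ M] (N : Submodule Rᵐᵒᵖ M) : Set R :=
  {a : R | ∀ x ∈ N, op a • x = 0}

/-- `q` is an associated (assassinator) prime of the right module `M`:
`q` is prime and is the annihilator of a nonzero submodule all of whose
nonzero submodules also have annihilator `q`. -/
def IsAssocPrime (R : Type u) [Ring R] (q : RightIdeal R) (M : Type u)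
    [AddCommGroup M] [Module Rᵐᵒᵖ M] : Prop :=
  IsPrimeIdeal q ∧ ∃ N : Submodule Rᵐᵒᵖ M, N ≠ ⊥ ∧
    ∀ N' : Submodule Rᵐᵒᵖ M, N' ≤ N → N' ≠ ⊥ → annSubSet R N' = (q : Set R)

/-- A critical right module: nonzero, and every proper quotient has strictly
smaller Krull dimension. -/
def IsCriticalMod (R : Type u) [Ring R] (M : Type u) [AddCommGroup M]
    [Module Rᵐᵒᵖ M] : Prop :=
  Nontrivial M ∧
    ∀ N : Submodule Rᵐᵒᵖ M, N ≠ ⊥ → rKdim R (M ⧸ N) < rKdim R M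

/-- `M` is a fully faithful right `R/q`-module: `q` annihilates `M` and every
nonzero submodule of `M` has annihilator exactly `q`. -/
def FullyFaithfulOver (R : Type u) [Ring R] (q : RightIdeal R) (M : Type u)
    [AddCommGroup M] [Module Rᵐᵒᵖ M] : Prop :=
  (q : Set R) ⊆ annSet R M ∧
    ∀ N : Submodule Rᵐᵒᵖ M, N ≠ ⊥ → annSubSet R N = (q : Set R)

/-!
A right ideal `I` of `R` is pushed forward to the prime right Noetherian ring `S = R/p`, where it
becomes a right ideal `E` with `Kdim (S/E) < Kdim S`. A nonzero right ideal `U` of `S` has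
`Kdim U = Kdim S`: the elements of `S` generating a right ideal of dimension at most `Kdim U` form
a nonzero two-sided ideal, hence an essential right ideal, and by Goldie it contains a regular `c`,
so that `Kdim S = Kdim cS ≤ Kdim U`. A nonzero `U` with `U ∩ E = 0` would embed in `S/E`, so `E` is
essential and, by Goldie again, contains a regular element. It lifts to an element of `I ∩ C(p)`.
-/

section Deviation

theorem devLE_iff {α : Ordinal.{u}} {P : Type u} [PartialOrder P] :
    DevLE α P ↔ ∀ f : ℕ → P, (∀ n, f (n + 1) ≤ f n) →
      ∃ N : ℕ, ∀ n, N ≤ n →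
        f (n + 1) = f n ∨ ∃ β, ∃ _ : β < α, DevLE β (Set.Icc (f (n + 1)) (f n)) := by
  rw [DevLE]

variable {α β : Ordinal.{u}} {P Q : Type u} [PartialOrder P] [PartialOrder Q]

theorem DevLE.of_subsingleton [Subsingleton P] : DevLE α P :=
  devLE_iff.2 fun _ _ => ⟨0, fun _ _ => Or.inl (Subsingleton.elim _ _)⟩

theorem DevLE.mono (hαβ : α ≤ β) (hP : DevLE α P) : DevLE β P := by
  rw [devLE_iff] at hP ⊢
  intro f hf
  obtain ⟨N, hN⟩ := hP f hf
  exact ⟨N, fun n hn => (hN n hn).imp_right fun ⟨γ, hγ, hdev⟩ => ⟨γ, hγ.trans_le hαβ, hdev⟩⟩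

theorem DevLE.of_strictMono {g : P → Q} (hg : StrictMono g) (hQ : DevLE α Q) : DevLE α P := by
  induction α using WellFoundedLT.induction generalizing P Q with
  | ind α ih =>
    rw [devLE_iff] at hQ ⊢
    intro f hf
    obtain ⟨N, hN⟩ := hQ (g ∘ f) fun n => hg.monotone (hf n)
    refine ⟨N, fun n hn => ?_⟩
    rcases hN n hn with heq | ⟨γ, hγ, hdev⟩
    · exact Or.inl ((hf n).eq_of_not_lt fun hlt => (hg hlt).ne heq)
    · let gIcc (x : Set.Icc (f (n + 1)) (f n)) : Set.Icc (g (f (n + 1))) (g (f n)) :=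
        ⟨g x, hg.monotone x.2.1, hg.monotone x.2.2⟩
      have hgIcc : StrictMono gIcc := fun _ _ hxy => hg hxy
      exact Or.inr ⟨γ, hγ, ih γ hγ hgIcc hdev⟩

theorem DevLE.prod (hP : DevLE α P) (hQ : DevLE α Q) : DevLE α (P × Q) := by
  induction α using WellFoundedLT.induction generalizing P Q with
  | ind α ih =>
    rw [devLE_iff] at hP hQ ⊢
    intro f hf
    obtain ⟨N, hN⟩ := hP (fun n => (f n).1) fun n => (hf n).1
    obtain ⟨M, hM⟩ := hQ (fun n => (f n).2) fun n => (hf n).2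
    refine ⟨max N M, fun n hn => ?_⟩
    have dev_Icc {γ} (hγ : γ < α) (h₁ : DevLE γ (Set.Icc (f (n + 1)).1 (f n).1))
        (h₂ : DevLE γ (Set.Icc (f (n + 1)).2 (f n).2)) :
        ∃ γ, ∃ _ : γ < α, DevLE γ (Set.Icc (f (n + 1)) (f n)) := by
      let split (x : Set.Icc (f (n + 1)) (f n)) :
          Set.Icc (f (n + 1)).1 (f n).1 × Set.Icc (f (n + 1)).2 (f n).2 :=
        (⟨x.1.1, x.2.1.1, x.2.2.1⟩, ⟨x.1.2, x.2.1.2, x.2.2.2⟩)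
      have hsplit : StrictMono split := fun x y hxy =>
        Prod.lt_iff.2 (Prod.lt_iff.1 (show x.1 < y.1 from hxy))
      exact ⟨γ, hγ, (ih γ hγ h₁ h₂).of_strictMono hsplit⟩
    rcases hN n (le_of_max_le_left hn) with heq₁ | ⟨γ₁, hγ₁, hdev₁⟩ <;>
      rcases hM n (le_of_max_le_right hn) with heq₂ | ⟨γ₂, hγ₂, hdev₂⟩
    · exact Or.inl (Prod.ext heq₁ heq₂)
    · have := (Set.subsingleton_Icc_of_ge heq₁.ge).coe_sort
      exact Or.inr (dev_Icc hγ₂ .of_subsingleton hdev₂)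
    · have := (Set.subsingleton_Icc_of_ge heq₂.ge).coe_sort
      exact Or.inr (dev_Icc hγ₁ hdev₁ .of_subsingleton)
    · exact Or.inr (dev_Icc (max_lt hγ₁ hγ₂) (hdev₁.mono (le_max_left _ _))
        (hdev₂.mono (le_max_right _ _)))

theorem DevLE.Iic_sup {L : Type u} [Lattice L] [IsModularLattice L] {a b : L}
    (ha : DevLE α (Set.Iic a)) (hb : DevLE α (Set.Iic b)) : DevLE α (Set.Iic (a ⊔ b)) := by
  have inclusion : StrictMono fun x : Set.Icc (a ⊓ b) a => (⟨x, x.2.2⟩ : Set.Iic a) :=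
    fun _ _ hxy => hxy
  have hIcc : DevLE α (Set.Icc b (a ⊔ b)) :=
    (ha.of_strictMono inclusion).of_strictMono (infIccOrderIsoIccSup a b).symm.strictMono
  let split (x : Set.Iic (a ⊔ b)) : Set.Iic b × Set.Icc b (a ⊔ b) :=
    (⟨x ⊓ b, inf_le_right⟩, ⟨x ⊔ b, le_sup_right, sup_le x.2 le_sup_right⟩)
  have hsplit : StrictMono split := fun x y hxy =>
    Prod.lt_iff.2 (Prod.lt_iff.1 (strictMono_inf_prod_sup (show x.1 < y.1 from hxy)))
  exact (hb.prod hIcc).of_strictMono hsplit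

theorem exists_devLE_Ici [WellFoundedGT P] (a : P) : ∃ α : Ordinal.{u}, DevLE α (Set.Ici a) := by
  induction a using WellFoundedGT.induction with
  | _ a ih =>
    choose dev hdev using ih
    let bound : Ordinal.{u} := ⨆ b : Set.Ioi a, Order.succ (dev b b.2)
    refine ⟨bound, devLE_iff.2 fun f hf => ?_⟩
    by_cases hreach : ∃ N, (f N : P) = a
    · obtain ⟨N, hN⟩ := hreach
      have hconst (n : ℕ) (hn : N ≤ n) : (f n : P) = a := by
        have hle : (f n : P) ≤ f N := antitone_nat_of_succ_le hf hn
        exact le_antisymm (hle.trans_eq hN) (f n).2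
      exact ⟨N, fun n hn => Or.inl <| Subtype.ext <|
        (hconst _ (Nat.le_succ_of_le hn)).trans (hconst n hn).symm⟩
    · push Not at hreach
      refine ⟨0, fun n _ => Or.inr ?_⟩
      have hlt : a < f (n + 1) := lt_of_le_of_ne (f (n + 1)).2 (hreach _).symm
      refine ⟨dev _ hlt, (Order.lt_succ _).trans_le
        (Ordinal.le_iSup (fun b : Set.Ioi a => Order.succ (dev b b.2)) ⟨_, hlt⟩), ?_⟩
      have inclusion : StrictMono fun x : Set.Icc (f (n + 1)) (f n) =>
          (⟨x, x.2.1⟩ : Set.Ici (f (n + 1) : P)) := fun _ _ hxy => hxy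
      exact (hdev _ hlt).of_strictMono inclusion

theorem exists_devLE [OrderBot P] [WellFoundedGT P] : ∃ α : Ordinal.{u}, DevLE α P := by
  obtain ⟨α, hα⟩ := exists_devLE_Ici (⊥ : P)
  have inclusion : StrictMono fun x : P => (⟨x, bot_le⟩ : Set.Ici (⊥ : P)) := fun _ _ hxy => hxy
  exact ⟨α, hα.of_strictMono inclusion⟩

end Deviation

section KrullDimension

variable {R S : Type u} [Ring R] [Ring S] {M N : Type u} [AddCommGroup M] [Module Rᵐᵒᵖ M]
  [AddCommGroup N] [Module Sᵐᵒᵖ N] {σ : Rᵐᵒᵖ →+* Sᵐᵒᵖ} [RingHomSurjective σ] {α : Ordinal.{u}}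

theorem rKdim_le (h : DevLE α (Submodule Rᵐᵒᵖ M)) : rKdim R M ≤ α := csInf_le' h

theorem devLE_rKdim [IsNoetherian Rᵐᵒᵖ M] : DevLE (rKdim R M) (Submodule Rᵐᵒᵖ M) :=
  csInf_mem (s := {α : Ordinal.{u} | DevLE α (Submodule Rᵐᵒᵖ M)}) exists_devLE

theorem rKdim_le_of_injective [IsNoetherian Sᵐᵒᵖ N] {f : M →ₛₗ[σ] N}
    (hf : Function.Injective f) : rKdim R M ≤ rKdim S N :=
  rKdim_le (devLE_rKdim.of_strictMono (Submodule.map_strictMono_of_injective hf))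

theorem rKdim_le_of_surjective [IsNoetherian Rᵐᵒᵖ M] {f : M →ₛₗ[σ] N}
    (hf : Function.Surjective f) : rKdim S N ≤ rKdim R M :=
  rKdim_le (devLE_rKdim.of_strictMono (Submodule.comap_strictMono_of_surjective hf))

theorem rKdim_submodule_mono [IsNoetherian Rᵐᵒᵖ M] {A B : Submodule Rᵐᵒᵖ M} (hAB : A ≤ B) :
    rKdim R A ≤ rKdim R B :=
  rKdim_le_of_injective (Submodule.inclusion_injective hAB)

theorem rKdim_sup_le [IsNoetherian Rᵐᵒᵖ M] {A B : Submodule Rᵐᵒᵖ M} (hA : rKdim R A ≤ α)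
    (hB : rKdim R B ≤ α) : rKdim R ↥(A ⊔ B) ≤ α := by
  have devLE_Iic {C : Submodule Rᵐᵒᵖ M} (hC : rKdim R C ≤ α) : DevLE α (Set.Iic C) :=
    (devLE_rKdim.mono hC).of_strictMono C.mapIic.symm.strictMono
  exact rKdim_le (((devLE_Iic hA).Iic_sup (devLE_Iic hB)).of_strictMono
    (A ⊔ B).mapIic.strictMono)

variable (R M α) in
/-- The largest submodule of `M` all of whose cyclic submodules have Krull dimension at most `α`. -/
def kdimTorsion [IsNoetherian Rᵐᵒᵖ M] : Submodule Rᵐᵒᵖ M where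
  carrier := {x | rKdim R (Submodule.span Rᵐᵒᵖ {x}) ≤ α}
  zero_mem' := by
    have : Subsingleton (Submodule.span Rᵐᵒᵖ {(0 : M)}) := by
      rw [Submodule.span_zero_singleton]; infer_instance
    exact rKdim_le .of_subsingleton
  add_mem' {x y} hx hy := by
    refine (rKdim_submodule_mono ?_).trans (rKdim_sup_le hx hy)
    rw [Submodule.span_singleton_le_iff_mem]
    exact Submodule.add_mem_sup (Submodule.mem_span_singleton_self x)
      (Submodule.mem_span_singleton_self y)
  smul_mem' r x hx := (rKdim_submodule_mono (Submodule.span_singleton_smul_le _ r x)).trans hx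

variable [IsNoetherian Rᵐᵒᵖ M]

theorem mem_kdimTorsion {x : M} :
    x ∈ kdimTorsion R M α ↔ rKdim R (Submodule.span Rᵐᵒᵖ {x}) ≤ α := Iff.rfl

theorem le_kdimTorsion {A : Submodule Rᵐᵒᵖ M} (hA : rKdim R A ≤ α) : A ≤ kdimTorsion R M α :=
  fun x hx => mem_kdimTorsion.2
    ((rKdim_submodule_mono ((Submodule.span_singleton_le_iff_mem x A).2 hx)).trans hA)

theorem map_mem_kdimTorsion (f : M →ₗ[Rᵐᵒᵖ] M) {x : M} (hx : x ∈ kdimTorsion R M α) :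
    f x ∈ kdimTorsion R M α := by
  rw [mem_kdimTorsion, ← Set.image_singleton, ← Submodule.map_span]
  exact (rKdim_le_of_surjective (f.submoduleMap_surjective _)).trans hx

end KrullDimension

section Essential

/-- An element of a lattice (such as a submodule) is essential if it meets every nonzero element
nontrivially. -/
def IsEssential {L : Type*} [PartialOrder L] [OrderBot L] (a : L) : Prop :=
  ∀ ⦃b⦄, Disjoint a b → b = ⊥

theorem IsEssential.mono {L : Type*} [PartialOrder L] [OrderBot L] {a b : L} (ha : IsEssential a)
    (hab : a ≤ b) : IsEssential b :=
  fun _ hc => ha (hc.mono_left hab)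

theorem isEssential_range_of_injective {A M : Type*} [Ring A] [AddCommGroup M] [Module A M]
    [IsNoetherian A M] {f : Module.End A M} (hf : Function.Injective f) :
    IsEssential (LinearMap.range f) := by
  intro J hJ
  have hcoprod : Function.Injective (f.coprod J.subtype) := by
    rw [← LinearMap.ker_eq_bot, LinearMap.ker_coprod_of_disjoint_range _ _ (by simpa using hJ),
      LinearMap.ker_eq_bot.2 hf, J.ker_subtype, Submodule.prod_bot]
  have := (IsNoetherian.equivPUnitOfProdInjective _ hcoprod).toEquiv.subsingleton
  exact Submodule.subsingleton_iff_eq_bot.1 this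

end Essential

section Goldie

variable {S : Type u} [Ring S]

/-- Left multiplication by an element of `S`, as an endomorphism of `S` as a right module. Its
kernel is the right annihilator of the element and its range the principal right ideal. -/
abbrev leftMul : S →+* Module.End Sᵐᵒᵖ S := Module.toModuleEnd Sᵐᵒᵖ S

theorem mem_ker_leftMul {a x : S} : x ∈ LinearMap.ker (leftMul a) ↔ a * x = 0 := Iff.rfl

theorem mul_mem_range_leftMul (a x : S) : a * x ∈ LinearMap.range (leftMul a) := ⟨x, rfl⟩

theorem mul_mem_of_mem_rightIdeal {J : RightIdeal S} {x : S} (hx : x ∈ J) (r : S) : x * r ∈ J :=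
  J.smul_mem (op r) hx

theorem isLeftRegular_iff_ker_leftMul_eq_bot {c : S} :
    IsLeftRegular c ↔ LinearMap.ker (leftMul c) = ⊥ := by
  rw [isLeftRegular_iff_right_eq_zero_of_mul, Submodule.eq_bot_iff]
  rfl

theorem mul_eq_zero_of_disjoint_ker_range {a x : S}
    (ha : Disjoint (LinearMap.ker (leftMul a)) (LinearMap.range (leftMul a)))
    (hx : a * (a * x) = 0) : a * x = 0 :=
  Submodule.disjoint_def.1 ha _ hx (mul_mem_range_leftMul a x)

theorem disjoint_ker_leftMul_add {A : RightIdeal S} {c a : S} (hcA : c ∈ A)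
    (hc : Disjoint A (LinearMap.ker (leftMul c))) (hca : c * a = 0)
    (ha : Disjoint (LinearMap.ker (leftMul a)) (LinearMap.range (leftMul a))) :
    Disjoint (A ⊔ LinearMap.range (leftMul a)) (LinearMap.ker (leftMul (c + a))) := by
  rw [Submodule.disjoint_def] at hc ⊢
  intro y hy hker
  obtain ⟨x, hx, _, ⟨t, rfl⟩, rfl⟩ := Submodule.mem_sup.1 hy
  change (c + a) * (x + a * t) = 0 at hker
  change x + a * t = 0
  have hsum : c * x + a * (x + a * t) = 0 := by
    rw [← hker, add_mul, mul_add c, ← mul_assoc c, hca, zero_mul, add_zero]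
  have hccx : c * (c * x) = 0 := by
    rw [eq_neg_of_add_eq_zero_left hsum, mul_neg, ← mul_assoc, hca, zero_mul, neg_zero]
  have hcx : c * x = 0 := hc _ (mul_mem_of_mem_rightIdeal hcA x) hccx
  have hx₀ : x = 0 := hc x hx hcx
  rw [hcx, hx₀, zero_add, zero_add] at hsum
  rw [hx₀, zero_add, mul_eq_zero_of_disjoint_ker_range ha hsum]

theorem IsPrimeRing.isEssential_of_twoSided (hS : IsPrimeRing S) {T : RightIdeal S}
    (hT : TwoSided T) (hT₀ : T ≠ ⊥) : IsEssential T := by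
  intro J hJ
  obtain ⟨t, ht, ht₀⟩ := T.ne_bot_iff.1 hT₀
  refine (Submodule.eq_bot_iff J).2 fun j hj => ?_
  refine (hS j t fun r => Submodule.disjoint_def.1 hJ _ (hT _ t ht) ?_).resolve_right ht₀
  rw [mul_assoc]
  exact mul_mem_of_mem_rightIdeal hj _

theorem exists_pow_succ_ne_zero_of_isNilpotent {A : Type*} [MonoidWithZero A] {x : A}
    (hx : IsNilpotent x) (hx₀ : x ≠ 0) : ∃ k, x ^ (k + 1) ≠ 0 ∧ x ^ (k + 2) = 0 := by
  have : Nontrivial A := ⟨x, 0, hx₀⟩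
  have hone_lt : 1 < nilpotencyClass x :=
    lt_of_le_of_ne (pos_nilpotencyClass_iff.2 hx) (Ne.symm (nilpotencyClass_eq_one.not.2 hx₀))
  obtain ⟨k, hk⟩ := Nat.exists_eq_add_of_le' hone_lt
  exact ⟨k, (nilpotencyClass_eq_succ_iff.1 hk).symm⟩

variable [IsNoetherian Sᵐᵒᵖ S]

/-- Choosing `b ≠ 0` in the left ideal `Sa` with maximal right annihilator forces `bSb = 0`: a
nonzero power of `ub` has the same right annihilator as `b`, so `ub` itself annihilates `b`. -/
theorem IsPrimeRing.eq_zero_of_forall_isNilpotent_mul (hS : IsPrimeRing S) {a : S}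
    (ha : ∀ s, IsNilpotent (s * a)) : a = 0 := by
  by_contra ha₀
  obtain ⟨_, ⟨s, hs₀, rfl⟩, hmax⟩ := set_has_maximal_iff_noetherian.2 ‹_›
    {I : RightIdeal S | ∃ s, s * a ≠ 0 ∧ LinearMap.ker (leftMul (s * a)) = I}
    ⟨_, 1, by simpa using ha₀, rfl⟩
  set b := s * a
  suffices hb : ∀ u, b * u * b = 0 from hs₀ (by simpa using hS b b hb)
  intro u
  by_cases hub : u * b = 0
  · rw [mul_assoc, hub, mul_zero]
  have hnil : IsNilpotent (u * b) := by simpa only [b, ← mul_assoc] using ha (u * s)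
  obtain ⟨k, hpow_ne, hpow_zero⟩ := exists_pow_succ_ne_zero_of_isNilpotent hnil hub
  have hpow_eq : (u * b) ^ (k + 1) = (u * b) ^ k * u * s * a := by
    rw [pow_succ]; simp only [b, mul_assoc]
  have hle : LinearMap.ker (leftMul b) ≤ LinearMap.ker (leftMul ((u * b) ^ (k + 1))) := by
    intro x hx
    rw [mem_ker_leftMul] at hx ⊢
    rw [pow_succ, mul_assoc, mul_assoc u, hx, mul_zero, mul_zero]
  have hker : LinearMap.ker (leftMul b) = LinearMap.ker (leftMul ((u * b) ^ (k + 1))) :=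
    hle.eq_of_not_lt (hmax _ ⟨_, hpow_eq ▸ hpow_ne, by rw [hpow_eq]⟩)
  have hmem : u * b ∈ LinearMap.ker (leftMul b) := by
    rw [hker, mem_ker_leftMul, ← pow_succ, hpow_zero]
  rw [mul_assoc]
  exact hmem

theorem exists_pow_disjoint_ker_range (a : S) : ∃ k ≠ 0,
    Disjoint (LinearMap.ker (leftMul (a ^ k))) (LinearMap.range (leftMul (a ^ k))) := by
  have := (Module.End.eventually_disjoint_ker_pow_range_pow (leftMul a)).and
    (Filter.eventually_ne_atTop 0)
  obtain ⟨k, hk, hk₀⟩ := this.exists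
  exact ⟨k, hk₀, by rwa [map_pow]⟩

theorem IsPrimeRing.exists_mem_disjoint_ker_range (hS : IsPrimeRing S) {J : RightIdeal S}
    (hJ : J ≠ ⊥) : ∃ a ∈ J, a ≠ 0 ∧
      Disjoint (LinearMap.ker (leftMul a)) (LinearMap.range (leftMul a)) := by
  obtain ⟨b, hb, hb₀⟩ := J.ne_bot_iff.1 hJ
  obtain ⟨s, hs⟩ : ∃ s, ¬ IsNilpotent (s * b) := by
    by_contra! hnil
    exact hb₀ (hS.eq_zero_of_forall_isNilpotent_mul hnil)
  have hbs : ¬ IsNilpotent (b * s) := fun ⟨k, hk⟩ =>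
    hs ⟨k + 1, by rw [pow_succ, ← mul_assoc, mul_pow_mul, hk, mul_zero, zero_mul]⟩
  obtain ⟨k, hk₀, hk⟩ := exists_pow_disjoint_ker_range (b * s)
  refine ⟨(b * s) ^ k, ?_, fun h₀ => hbs ⟨k, h₀⟩, hk⟩
  rw [← Nat.succ_pred hk₀, pow_succ', mul_assoc]
  exact mul_mem_of_mem_rightIdeal hb _

theorem IsPrimeRing.eq_zero_of_isEssential_ker (hS : IsPrimeRing S) {z : S}
    (hz : IsEssential (LinearMap.ker (leftMul z))) : z = 0 := by
  refine hS.eq_zero_of_forall_isNilpotent_mul fun s => ?_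
  obtain ⟨k, hk₀, hk⟩ := exists_pow_disjoint_ker_range (s * z)
  have hle : LinearMap.ker (leftMul z) ≤ LinearMap.ker (leftMul ((s * z) ^ k)) := by
    intro x hx
    rw [mem_ker_leftMul] at hx ⊢
    rw [← Nat.succ_pred hk₀, pow_succ, mul_assoc, mul_assoc s, hx, mul_zero, mul_zero]
  have hrange : LinearMap.range (leftMul ((s * z) ^ k)) = ⊥ := hz.mono hle hk
  have hmem := mul_mem_range_leftMul ((s * z) ^ k) 1
  rw [hrange, mul_one, Submodule.mem_bot] at hmem
  exact ⟨k, hmem⟩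

/-- Take a maximal right ideal `A ≤ E` admitting `c ∈ A` whose right annihilator meets `A`
trivially. If that annihilator met `E`, it would contain an `a ≠ 0` in `E`, and `c + a` would do
for the larger `A ⊔ aS`. -/
theorem IsEssential.exists_isLeftRegular (hS : IsPrimeRing S) {E : RightIdeal S}
    (hE : IsEssential E) : ∃ c ∈ E, IsLeftRegular c := by
  obtain ⟨A, ⟨hAE, c, hcA, hc⟩, hmax⟩ := set_has_maximal_iff_noetherian.2 ‹_›
    {A : RightIdeal S | A ≤ E ∧ ∃ c ∈ A, Disjoint A (LinearMap.ker (leftMul c))}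
    ⟨⊥, bot_le, 0, zero_mem _, disjoint_bot_left⟩
  refine ⟨c, hAE hcA, isLeftRegular_iff_ker_leftMul_eq_bot.2 (hE (disjoint_iff.2 ?_))⟩
  by_contra hne
  obtain ⟨a, ⟨haE, hca⟩, ha₀, ha⟩ := hS.exists_mem_disjoint_ker_range hne
  have haA : a ∉ A := fun haA => ha₀ (Submodule.disjoint_def.1 hc a haA hca)
  have ha_range : a ∈ LinearMap.range (leftMul a) := ⟨1, mul_one a⟩
  have hrange_le : LinearMap.range (leftMul a) ≤ E := by
    rintro _ ⟨x, rfl⟩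
    exact mul_mem_of_mem_rightIdeal haE x
  refine hmax (A ⊔ LinearMap.range (leftMul a))
    ⟨sup_le hAE hrange_le, c + a, Submodule.add_mem_sup hcA ha_range,
      disjoint_ker_leftMul_add hcA hc hca ha⟩ ?_
  exact left_lt_sup.2 fun hle => haA (hle ha_range)

theorem IsEssential.exists_isRegular (hS : IsPrimeRing S) {E : RightIdeal S}
    (hE : IsEssential E) : ∃ c ∈ E, IsRegular c := by
  obtain ⟨c, hcE, hc⟩ := hE.exists_isLeftRegular hS
  refine ⟨c, hcE, hc, isRightRegular_iff_left_eq_zero_of_mul.2 fun x hxc => ?_⟩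
  have hrange_le : LinearMap.range (leftMul c) ≤ LinearMap.ker (leftMul x) := by
    rintro _ ⟨y, rfl⟩
    change x * (c * y) = 0
    rw [← mul_assoc, hxc, zero_mul]
  exact hS.eq_zero_of_isEssential_ker ((isEssential_range_of_injective hc).mono hrange_le)

end Goldie

section PrimeRing

variable {S : Type u} [Ring S] [IsNoetherian Sᵐᵒᵖ S]

theorem twoSided_kdimTorsion (α : Ordinal.{u}) : TwoSided (kdimTorsion S S α) :=
  fun r _ hx => map_mem_kdimTorsion (leftMul r) hx

theorem rKdim_le_rKdim_span_singleton_of_isLeftRegular {c : S} (hc : IsLeftRegular c) :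
    rKdim S S ≤ rKdim S (Submodule.span Sᵐᵒᵖ {c}) := by
  have hmem (x : S) : leftMul c x ∈ Submodule.span Sᵐᵒᵖ {c} :=
    Submodule.mem_span_singleton.2 ⟨op x, rfl⟩
  exact rKdim_le_of_injective (f := (leftMul c).codRestrict _ hmem) fun x y hxy =>
    hc (congrArg Subtype.val hxy)

theorem IsPrimeRing.rKdim_le_rKdim_rightIdeal (hS : IsPrimeRing S) {U : RightIdeal S}
    (hU : U ≠ ⊥) : rKdim S S ≤ rKdim S U := by
  have hT₀ : kdimTorsion S S (rKdim S U) ≠ ⊥ := ne_bot_of_le_ne_bot hU (le_kdimTorsion le_rfl)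
  obtain ⟨c, hcT, hc⟩ :=
    (hS.isEssential_of_twoSided (twoSided_kdimTorsion _) hT₀).exists_isLeftRegular hS
  exact (rKdim_le_rKdim_span_singleton_of_isLeftRegular hc).trans hcT

theorem IsPrimeRing.isEssential_of_rKdim_quotient_lt (hS : IsPrimeRing S) {E : RightIdeal S}
    (hE : rKdim S (S ⧸ E) < rKdim S S) : IsEssential E := by
  intro U hEU
  by_contra hU
  have hinj : Function.Injective (E.mkQ ∘ₗ U.subtype) := by
    rw [← LinearMap.ker_eq_bot, LinearMap.ker_comp, E.ker_mkQ]
    exact Submodule.disjoint_iff_comap_eq_bot.1 hEU.symm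
  exact hE.not_ge ((hS.rKdim_le_rKdim_rightIdeal hU).trans (rKdim_le_of_injective hinj))

end PrimeRing

section QuotientRing

variable {R S : Type u} [Ring R] [Ring S] {p : RightIdeal R}

section RingHom

/-- A ring homomorphism `R →+* S`, seen as a semilinear map of regular right modules. -/
def rightSemilinearMap (f : R →+* S) : R →ₛₗ[f.op] S where
  toFun := f
  map_add' := map_add f
  map_smul' r x := map_mul f x (unop r)

variable (f : R →+* S) [RingHomSurjective f]

instance : RingHomSurjective f.op :=
  ⟨fun s => (f.surjective (unop s)).imp' op fun _ hr => congrArg op hr⟩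

theorem rightSemilinearMap_surjective : Function.Surjective (rightSemilinearMap f) := f.surjective

include f in
theorem isNoetherian_right_of_surjective [IsNoetherian Rᵐᵒᵖ R] : IsNoetherian Sᵐᵒᵖ S :=
  isNoetherian_of_surjective (rightSemilinearMap f)
    (LinearMap.range_eq_top.2 (rightSemilinearMap_surjective f))

theorem rKdim_quotient_map_le [IsNoetherian Rᵐᵒᵖ R] (I : RightIdeal R) :
    rKdim S (S ⧸ I.map (rightSemilinearMap f)) ≤ rKdim R (R ⧸ I) :=
  rKdim_le_of_surjective (f := I.mapQ _ (rightSemilinearMap f) (I.le_comap_map _))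
    (.of_comp (g := I.mkQ) <|
      (Submodule.mkQ_surjective _).comp (rightSemilinearMap_surjective f))

variable {f} (hker : ∀ x, f x = 0 ↔ x ∈ p)
include hker

theorem rKdim_quotient_le_of_ker_eq [IsNoetherian Sᵐᵒᵖ S] : rKdim R (R ⧸ p) ≤ rKdim S S :=
  rKdim_le_of_injective (f := p.liftQ (rightSemilinearMap f) fun x hx => (hker x).2 hx) <|
    LinearMap.ker_eq_bot.1 <| Submodule.ker_liftQ_eq_bot _ _ _ fun x hx => (hker x).1 hx

theorem IsPrimeIdeal.isPrimeRing_of_ker_eq (hp : IsPrimeIdeal p) : IsPrimeRing S := by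
  intro a b hab
  obtain ⟨a, rfl⟩ := f.surjective a
  obtain ⟨b, rfl⟩ := f.surjective b
  rw [hker, hker]
  exact hp.2.2 a b fun r => (hker _).1 (by rw [map_mul, map_mul, hab])

theorem mem_CMod_iff_isRegular {c : R} : c ∈ CMod p ↔ IsRegular (f c) := by
  simp only [isRegular_iff, isLeftRegular_iff_right_eq_zero_of_mul,
    isRightRegular_iff_left_eq_zero_of_mul, f.surjective.forall, ← map_mul, hker]
  rfl

end RingHom

/-- The two-sided ideal `p` as a left ideal, so that `R ⧸ hp.toIdeal` is available as a ring. -/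
def TwoSided.toIdeal (hp : TwoSided p) : Ideal R where
  carrier := p
  add_mem' := p.add_mem
  zero_mem' := p.zero_mem
  smul_mem' := hp

instance (hp : TwoSided p) : hp.toIdeal.IsTwoSided :=
  ⟨fun r hx => mul_mem_of_mem_rightIdeal (J := p) hx r⟩

theorem IsPrimeIdeal.inter_CMod_nonempty_of_rKdim_lt [IsNoetherian Rᵐᵒᵖ R] (hp : IsPrimeIdeal p)
    {I : RightIdeal R} (hI : rKdim R (R ⧸ I) < rKdim R (R ⧸ p)) :
    ((I : Set R) ∩ CMod p).Nonempty := by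
  let f := Ideal.Quotient.mk hp.1.toIdeal
  have hker (x : R) : f x = 0 ↔ x ∈ p := Ideal.Quotient.eq_zero_iff_mem
  have hNoeth := isNoetherian_right_of_surjective f
  have hPrime := hp.isPrimeRing_of_ker_eq hker
  have hlt := (rKdim_quotient_map_le f I).trans_lt (hI.trans_le (rKdim_quotient_le_of_ker_eq hker))
  obtain ⟨_, ⟨c, hcI, rfl⟩, hc⟩ :=
    (hPrime.isEssential_of_rKdim_quotient_lt hlt).exists_isRegular hPrime
  exact ⟨c, hcI, (mem_CMod_iff_isRegular hker).2 hc⟩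

end QuotientRing

theorem stmt_11_general {R : Type u} [Ring R] [IsNoetherian Rᵐᵒᵖ R] (m : Ordinal.{u})
    (X : Set (RightIdeal R)) (hX : ∀ p ∈ X, IsPrimeIdeal p ∧ m ≤ rKdim R (R ⧸ p))
    (hint : ∀ I : RightIdeal R, (∀ p ∈ X, ((I : Set R) ∩ CMod p).Nonempty) →
      ((I : Set R) ∩ {v : R | ∀ p ∈ X, v ∈ CMod p}).Nonempty) :
    ∀ I : RightIdeal R, rKdim R (R ⧸ I) < m →
      ((I : Set R) ∩ {v : R | ∀ p ∈ X, v ∈ CMod p}).Nonempty :=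
  fun I hI => hint I fun p hp =>
    (hX p hp).1.inter_CMod_nonempty_of_rKdim_lt (hI.trans_le (hX p hp).2)

/-- If `X` has the right intersection condition then `g ⊆ k`. -/
theorem stmt_11 {R : Type u} [Ring R] (hpr : IsPrimeRing R)
    [IsNoetherianRing R] [IsNoetherian Rᵐᵒᵖ R]
    (n : ℕ) (hn : rKdim R R = (n : Ordinal)) (m : ℕ) (hm : m ≤ n)
    (X : Set (RightIdeal R))
    (hX : ∀ p ∈ X, IsPrimeIdeal p ∧ rKdim R (R ⧸ p) = (m : Ordinal))
    (V : Set R) (hV : V = {v : R | ∀ p ∈ X, v ∈ CMod p})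
    (hint : ∀ I : RightIdeal R,
      (∀ p ∈ X, ((I : Set R) ∩ CMod p).Nonempty) → ((I : Set R) ∩ V).Nonempty) :
    ∀ I : RightIdeal R, rKdim R (R ⧸ I) < (m : Ordinal) →
      ((I : Set R) ∩ V).Nonempty := by
  subst hV
  exact stmt_11_general m X (fun p hp => (hX p hp).imp_right Eq.ge) hint
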